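/- Let G₁ and G₂ be finite simple graphs and h ∈ ℕ. If the multiset of h-round WL colors of the vertices of G₁ (computed in G₁) differs from the multiset of h-round WL colors of the vertices of G₂ (computed in G₂), then the multiset {{c_h^{B_{G₁}(v,h)}(v) : v a vertex of G₁}} differs from the multiset {{c_h^{B_{G₂}(v,h)}(v) : v a vertex of G₂}}, where each color c_h^{B_G(v,h)}(v) is the h-round WL color of the root v computed within its own height-h rooted subgraph. (Hence any pair of graphs discriminated by 1-WL is also discriminated by NGNN with center pooling, so NGNN is at least as powerful as 1-WL.) -/

import Mathlib

/-- The type of 1-WL colors after `t` refinement rounds. -/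
def WLColor : ℕ → Type
  | 0 => Unit
  | t + 1 => WLColor t × Multiset (WLColor t)

/-- The `t`-round 1-WL color of a vertex `v` in a finite simple graph `G`:
`c_0(v)` is a fixed constant, and `c_{t+1}(v) = (c_t(v), {{c_t(u) : u ∈ N(v)}})`. -/
noncomputable def wlColor {V : Type} [Finite V] (G : SimpleGraph V) : (t : ℕ) → V → WLColor t
  | 0, _ => ()
  | t + 1, v =>
    (wlColor G t v, ((Set.toFinite {u | G.Adj v u}).toFinset.val).map (wlColor G t))

/-- `ball G v h` is the set of vertices at shortest-path distance at most `h` from `v`. -/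
def ball {V : Type} (G : SimpleGraph V) (v : V) (h : ℕ) : Set V :=
  {u | G.Reachable v u ∧ G.dist v u ≤ h}

/-- `sphere G v k` is the set `Q_{v,G}^k` of vertices at shortest-path distance exactly `k`. -/
def sphere {V : Type} (G : SimpleGraph V) (v : V) (k : ℕ) : Set V :=
  {u | G.Reachable v u ∧ G.dist v u = k}

/-- A graph is `r`-regular if every vertex has exactly `r` neighbors. -/
def IsRegularGraph {V : Type} (G : SimpleGraph V) (r : ℕ) : Prop :=
  ∀ v : V, Nat.card {u : V // G.Adj v u} = r

lemma self_mem_ball {V : Type} (G : SimpleGraph V) (v : V) (h : ℕ) : v ∈ ball G v h :=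
  ⟨SimpleGraph.Reachable.refl v, by simp [SimpleGraph.dist_self]⟩

/-- The multiset of `t`-round WL colors of all vertices of `G`. -/
noncomputable def graphColorMultiset {V : Type} [Finite V] (G : SimpleGraph V) (t : ℕ) :
    Multiset (WLColor t) :=
  haveI := Fintype.ofFinite V
  Finset.univ.val.map (wlColor G t)

/-- The `(h,L)` subgraph-WL node representation of `w`: the multiset of `L`-round WL colors
of the vertices of the height-`h` rooted subgraph `B_G(w,h)`, computed within that subgraph. -/
noncomputable def subgraphWLNodeRep {V : Type} [Finite V] (G : SimpleGraph V) (h L : ℕ)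
    (w : V) : Multiset (WLColor L) :=
  graphColorMultiset (G.induce (ball G w h)) L

/-- The `(h,L)` subgraph-WL graph representation of `G`. -/
noncomputable def subgraphWLGraphRep {V : Type} [Finite V] (G : SimpleGraph V) (h L : ℕ) :
    Multiset (Multiset (WLColor L)) :=
  haveI := Fintype.ofFinite V
  Finset.univ.val.map (subgraphWLNodeRep G h L)

/-- `a_{v,G}^{i,k}`: the number of vertices in `Q_{v,G}^{k+1}` with exactly `i` neighbors in
`Q_{v,G}^k`.  The edge configuration `C_{v,G}^k` is the sequence `i ↦ a_{v,G}^{i,k}` (`i ≥ 1`). -/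
noncomputable def edgeConfig {V : Type} (G : SimpleGraph V) (v : V) (k i : ℕ) : ℕ :=
  Nat.card {u : V // u ∈ sphere G v (k + 1) ∧
    Nat.card {w : V // w ∈ sphere G v k ∧ G.Adj u w} = i}

/-- The number of edges of `G` with one endpoint in `Q_{v,G}^i` and the other in `Q_{v,G}^{i+1}`. -/
noncomputable def crossEdges {V : Type} (G : SimpleGraph V) (v : V) (i : ℕ) : ℕ :=
  Nat.card {p : V × V // p.1 ∈ sphere G v i ∧ p.2 ∈ sphere G v (i + 1) ∧ G.Adj p.1 p.2}

/-- The multiset of root colors: for each vertex `v` of `G`, the `h`-round WL color of `v`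
computed within its own height-`h` rooted subgraph `B_G(v,h)`. -/
noncomputable def centerPoolRep {V : Type} [Finite V] (G : SimpleGraph V) (h : ℕ) :
    Multiset (WLColor h) :=
  haveI := Fintype.ofFinite V
  Finset.univ.val.map (fun v => wlColor (G.induce (ball G v h)) h ⟨v, self_mem_ball G v h⟩)

/-!
After `t` rounds the color of a vertex has only seen the vertices within distance `t` of it, so it
can be computed inside any vertex set containing its radius-`t` ball. Hence the root of `B_G(v, h)`
has the same `h`-round color there as in `G`, and center pooling returns exactly the multiset of
`h`-round WL colors of `G`.
-/

section Ball

variable {V : Type} {G : SimpleGraph V}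

lemma mem_ball_iff_edist_le {u v : V} {h : ℕ} : u ∈ ball G v h ↔ G.edist v u ≤ h := by
  constructor
  · rintro ⟨hreach, hdist⟩
    rw [← hreach.coe_dist_eq_edist]
    exact_mod_cast hdist
  · intro hedist
    have hreach : G.Reachable v u :=
      SimpleGraph.reachable_of_edist_ne_top (ne_top_of_le_ne_top (ENat.natCast_ne_top h) hedist)
    rw [← hreach.coe_dist_eq_edist] at hedist
    exact ⟨hreach, by exact_mod_cast hedist⟩

lemma ball_subset_ball_of_edist_add_le {u v : V} {r h : ℕ} (huv : G.edist v u + r ≤ h) :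
    ball G u r ⊆ ball G v h := by
  intro w hw
  rw [mem_ball_iff_edist_le] at hw ⊢
  calc
    G.edist v w ≤ G.edist v u + G.edist u w := SimpleGraph.edist_triangle
    _ ≤ G.edist v u + r := by gcongr
    _ ≤ h := huv

lemma ball_subset_ball_succ (v : V) (r : ℕ) : ball G v r ⊆ ball G v (r + 1) :=
  ball_subset_ball_of_edist_add_le (by simp)

lemma ball_subset_ball_succ_of_adj {u v : V} (hadj : G.Adj v u) (r : ℕ) :
    ball G u r ⊆ ball G v (r + 1) :=
  ball_subset_ball_of_edist_add_le (by simp [SimpleGraph.edist_eq_one_iff_adj.mpr hadj, add_comm])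

lemma neighborSet_subset_ball_succ (v : V) (r : ℕ) : G.neighborSet v ⊆ ball G v (r + 1) :=
  fun u hadj ↦ ball_subset_ball_succ_of_adj hadj r (self_mem_ball G u r)

end Ball

section Color

variable {V : Type} [Finite V] (G : SimpleGraph V)

lemma wlColor_succ (t : ℕ) (v : V) [Fintype (G.neighborSet v)] :
    wlColor G (t + 1) v = (wlColor G t v, (G.neighborFinset v).val.map (wlColor G t)) := by
  have hnbr : (Set.toFinite {u | G.Adj v u}).toFinset = G.neighborFinset v := by
    ext u
    simp
  rw [wlColor, hnbr]

theorem wlColor_induce_of_ball_subset {s : Set V} (t : ℕ) (v : s) (hball : ball G v t ⊆ s) :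
    wlColor (G.induce s) t v = wlColor G t v := by
  classical
  have := Fintype.ofFinite V
  induction t generalizing v with
  | zero => rfl
  | succ t ih =>
    have hroot : wlColor (G.induce s) t v = wlColor G t v :=
      ih v ((ball_subset_ball_succ _ t).trans hball)
    have hneighbors : ∀ u ∈ (G.induce s).neighborFinset v,
        wlColor (G.induce s) t u = wlColor G t u := by
      intro u hu
      have hadj : G.Adj v u := by simpa using hu
      exact ih u ((ball_subset_ball_succ_of_adj hadj t).trans hball)
    have hmap : ((G.induce s).neighborFinset v).map (.subtype _) = G.neighborFinset v :=
      G.map_neighborFinset_induce_of_neighborSet_subset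
        ((neighborSet_subset_ball_succ _ t).trans hball)
    rw [wlColor_succ, wlColor_succ, hroot, ← hmap, Finset.map_val, Multiset.map_map]
    exact congrArg _ (Multiset.map_congr rfl hneighbors)

theorem centerPoolRep_eq_graphColorMultiset (h : ℕ) :
    centerPoolRep G h = graphColorMultiset G h :=
  Multiset.map_congr rfl fun v _ ↦
    wlColor_induce_of_ball_subset G h ⟨v, self_mem_ball G v h⟩ subset_rfl

end Color

/-- If the multisets of `h`-round WL colors of `G₁` and `G₂` differ, then
the multisets `{{c_h^{B_G(v,h)}(v) : v ∈ G}}` of root colors computed within each vertex's own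
height-`h` rooted subgraph also differ: NGNN with center pooling is at least as powerful as
1-WL. -/
theorem ngnn_at_least_as_powerful_as_wl {V₁ V₂ : Type} [Finite V₁] [Finite V₂]
    (G₁ : SimpleGraph V₁) (G₂ : SimpleGraph V₂) (h : ℕ)
    (hwl : graphColorMultiset G₁ h ≠ graphColorMultiset G₂ h) :
    centerPoolRep G₁ h ≠ centerPoolRep G₂ h := by
  rwa [centerPoolRep_eq_graphColorMultiset, centerPoolRep_eq_graphColorMultiset]
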